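/- arXiv:2308.00577 — 8 statements merged into one kernel-verified Lean document; each statement's English description precedes it below -/
import Mathlib

section
/- Let B be a group, η : B → ℤ a surjective homomorphism with kernel L, m ≥ 1, and g ∈ B such that: (a) η(g) = 1 and gᵐ commutes with every element of L; (b) there is a subgroup G ≤ L such that L is the internal direct product of the subgroups Gᵢ := gⁱ G g⁻ⁱ, i = 0, …, m−1. Then the map θ : G ≀ₘ ℤ → B defined by θ(a; k) = (∏_{i=0}^{m−1} gⁱ a(i) g⁻ⁱ) · gᵏ is a group isomorphism; moreover η(θ(a;k)) = k, so θ maps (Fin m → G) × {0} onto L. -/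
/-- The automorphism of `Fin m → G` cyclically shifting coordinates: `(σ f)(i) = f (i - 1)`. -/
def cycShift (G : Type*) [Group G] (m : ℕ) [NeZero m] : MulAut (Fin m → G) where
  toFun f i := f (i - 1)
  invFun f i := f (i + 1)
  left_inv f := by funext i; simp
  right_inv f := by funext i; simp
  map_mul' f g := rfl

/-- The wreath product `G ≀ₘ ℤ = (Fin m → G) ⋊_σ ℤ`. -/
abbrev WrZ (G : Type*) [Group G] (m : ℕ) [NeZero m] :=
  (Fin m → G) ⋊[zpowersHom (MulAut (Fin m → G)) (cycShift G m)] Multiplicative ℤ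

/-- The conjugate `g S g⁻¹` of a subgroup `S` by an element `g`. -/
def conjSub {B : Type*} [Group B] (g : B) (S : Subgroup B) : Subgroup B :=
  Subgroup.map (MulAut.conj g).toMonoidHom S

/-- The map `(Π i, gⁱ G g⁻ⁱ) → B` given by the ordered product `x₀ x₁ ⋯ x_{m−1}`. -/
def dmap {B : Type*} [Group B] (m : ℕ) (g : B) (G : Subgroup B) :
    (∀ i : Fin m, ↥(conjSub (g ^ (i : ℕ)) G)) → B :=
  fun u => (List.ofFn fun i => (u i : B)).prod

/-- The map `θ : G ≀ₘ ℤ → B`, `θ(a; k) = (∏_{i=0}^{m−1} gⁱ a(i) g⁻ⁱ) · gᵏ`. -/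
def thetaW {B : Type*} [Group B] (m : ℕ) [NeZero m] (g : B) (G : Subgroup B) :
    WrZ ↥G m → B :=
  fun p => (List.ofFn fun i : Fin m =>
      g ^ (i : ℕ) * ((p.left i : B)) * (g ^ (i : ℕ))⁻¹).prod *
    g ^ (Multiplicative.toAdd p.right)

/-- The ordered product `∏ᵢ gⁱ a(i) g⁻ⁱ`. -/
def conjProd {B : Type*} [Group B] (m : ℕ) (g : B) (G : Subgroup B) (a : Fin m → G) : B :=
  (List.ofFn fun i : Fin m => g ^ (i : ℕ) * (a i : B) * (g ^ (i : ℕ))⁻¹).prod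

/-- The coordinatewise bijection `a ↦ (gⁱ a(i) g⁻ⁱ)ᵢ` onto the product of the conjugates of `G`. -/
noncomputable def conjEquiv {B : Type*} [Group B] (m : ℕ) (g : B) (G : Subgroup B) :
    (Fin m → G) ≃* (∀ i : Fin m, ↥(conjSub (g ^ (i : ℕ)) G)) :=
  MulEquiv.piCongrRight fun i =>
    G.equivMapOfInjective (MulAut.conj (g ^ (i : ℕ))).toMonoidHom (MulAut.conj _).injective

theorem conjProd_eq_dmap {B : Type*} [Group B] (m : ℕ) (g : B) (G : Subgroup B)
    (a : Fin m → G) : conjProd m g G a = dmap m g G (conjEquiv m g G a) :=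
  rfl

theorem conjProd_succ {B : Type*} [Group B] (n : ℕ) (g : B) (G : Subgroup B)
    (a : Fin (n + 1) → G) :
    conjProd (n + 1) g G a = a 0 * g * conjProd n g G (fun i => a i.succ) * g⁻¹ := by
  have h := map_list_prod (MulAut.conj g)
    (List.ofFn fun i : Fin n => g ^ (i : ℕ) * (a i.succ : B) * (g ^ (i : ℕ))⁻¹)
  rw [MulAut.conj_apply, List.map_ofFn] at h
  simp only [conjProd, List.ofFn_succ, List.prod_cons, mul_assoc] at h ⊢
  rw [h]
  simp [Function.comp_def, pow_succ', mul_assoc]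

theorem conjProd_succ_last {B : Type*} [Group B] (n : ℕ) (g : B) (G : Subgroup B)
    (a : Fin (n + 1) → G) :
    conjProd (n + 1) g G a =
      conjProd n g G (fun i => a i.castSucc) * (g ^ n * a (Fin.last n) * (g ^ n)⁻¹) := by
  rw [conjProd, List.ofFn_succ', List.concat_eq_append, List.prod_append, List.prod_singleton]
  rfl

theorem conjProd_one {B : Type*} [Group B] (m : ℕ) (g : B) (G : Subgroup B) :
    conjProd m g G 1 = 1 := by
  simp [conjProd]

/-- Conjugation by `g` permutes the factors of `∏ᵢ gⁱ a(i) g⁻ⁱ` cyclically. -/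
theorem conj_conjProd {B : Type*} [Group B] (m : ℕ) [NeZero m] (g : B) (G : Subgroup B)
    (hmul : ∀ a b : Fin m → G, conjProd m g G (a * b) = conjProd m g G a * conjProd m g G b)
    (hcomm : ∀ x ∈ G, Commute (g ^ m) x) (a : Fin m → G) :
    g * conjProd m g G a * g⁻¹ = conjProd m g G (cycShift G m a) := by
  obtain _ | n := m
  · exact (NeZero.ne 0 rfl).elim
  set x : G := a (Fin.last n)
  set c : Fin n → G := fun i => a i.castSucc
  have hshift : cycShift G (n + 1) a = Fin.cons x c := by
    funext i
    refine Fin.cases ?_ (fun j => ?_) i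
    · change a (0 - 1) = x
      rw [zero_sub, ← eq_neg_of_add_eq_zero_left (Fin.last_add_one n)]
    · change a (j.succ - 1) = c j
      congr 1
      rw [← Fin.coeSucc_eq_succ, add_sub_cancel_right]
  have hx : conjProd (n + 1) g G (Fin.cons x 1) = x := by
    rw [conjProd_succ]
    have h1 : (fun i : Fin n => (Fin.cons x 1 : Fin (n + 1) → G) i.succ) = 1 := by
      funext i; simp
    rw [h1, conjProd_one]
    simp
  have hc : conjProd (n + 1) g G (Fin.cons 1 c) = g * conjProd n g G c * g⁻¹ := by
    rw [conjProd_succ]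
    simp
  have hxc : (Fin.cons x c : Fin (n + 1) → G) = Fin.cons 1 c * Fin.cons x 1 := by
    funext i
    refine Fin.cases ?_ (fun j => ?_) i <;> simp
  have hlast : g ^ (n + 1) * (x : B) * (g ^ (n + 1))⁻¹ = x := by
    rw [(hcomm x x.2).eq, mul_inv_cancel_right]
  rw [hshift, hxc, hmul, hx, hc, conjProd_succ_last]
  conv_rhs => rw [← hlast]
  simp [pow_succ', mul_assoc, c, x]

theorem conj_zpow_conjProd {B : Type*} [Group B] (m : ℕ) [NeZero m] (g : B) (G : Subgroup B)
    (hmul : ∀ a b : Fin m → G, conjProd m g G (a * b) = conjProd m g G a * conjProd m g G b)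
    (hcomm : ∀ x ∈ G, Commute (g ^ m) x) (k : ℤ) (a : Fin m → G) :
    g ^ k * conjProd m g G a * (g ^ k)⁻¹ = conjProd m g G ((cycShift G m ^ k) a) := by
  have hconj := conj_conjProd m g G hmul hcomm
  induction k generalizing a with
  | zero => simp
  | succ k ih =>
    rw [zpow_add_one (cycShift G m), MulAut.mul_apply, ← ih, ← hconj, zpow_add_one]
    group
  | pred k ih =>
    have h := hconj ((cycShift G m)⁻¹ a)
    rw [MulAut.apply_inv_self] at h
    rw [zpow_sub_one (cycShift G m), MulAut.mul_apply, ← ih, zpow_sub_one, ← h]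
    group

/-- Let `η : B → ℤ` be surjective with kernel `L`, `m ≥ 1`, `g ∈ B` with
`η g = 1` and `gᵐ` commuting with `L`, and `G ≤ L` a subgroup such that `L` is the internal
direct product of the conjugates `Gᵢ = gⁱ G g⁻ⁱ`, `i = 0, …, m−1` (the ordered-product map
`(Π i, Gᵢ) → B` is an injective homomorphism with range `L`). Then
`θ : G ≀ₘ ℤ → B`, `θ(a;k) = (∏ᵢ gⁱ a(i) g⁻ⁱ)·gᵏ`, is a group isomorphism, and
`η (θ (a;k)) = k` (so `θ` maps `(Fin m → G) × {0}` onto `L`). -/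
theorem stmt_4 {B : Type*} [Group B] (η : B →* Multiplicative ℤ)
    (hsurj : Function.Surjective η) (m : ℕ) (hm : 1 ≤ m) [NeZero m] (g : B)
    (hg : η g = Multiplicative.ofAdd 1)
    (hcomm : ∀ v ∈ η.ker, Commute (g ^ m) v)
    (G : Subgroup B) (hGL : G ≤ η.ker)
    (hhom : ∀ u v : ∀ i : Fin m, ↥(conjSub (g ^ (i : ℕ)) G),
      dmap m g G (u * v) = dmap m g G u * dmap m g G v)
    (hinj : Function.Injective (dmap m g G))
    (hrange : Set.range (dmap m g G) = (η.ker : Set B)) :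
    (∀ x y : WrZ ↥G m, thetaW m g G (x * y) = thetaW m g G x * thetaW m g G y) ∧
    Function.Bijective (thetaW m g G) ∧
    (∀ p : WrZ ↥G m, η (thetaW m g G p) = p.right) ∧
    thetaW m g G '' {p : WrZ ↥G m | p.right = 1} = (η.ker : Set B) := by
  have hmul : ∀ a b : Fin m → G,
      conjProd m g G (a * b) = conjProd m g G a * conjProd m g G b := fun a b => by
    simp only [conjProd_eq_dmap, map_mul, hhom]
  have htheta : ∀ p : WrZ ↥G m,
      thetaW m g G p = conjProd m g G p.left * g ^ (Multiplicative.toAdd p.right) := fun _ => rfl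
  have hker : ∀ a, conjProd m g G a ∈ η.ker := fun a =>
    hrange.subset ⟨conjEquiv m g G a, rfl⟩
  have honto : ∀ b ∈ η.ker, ∃ a, conjProd m g G a = b := fun b hb => by
    obtain ⟨u, rfl⟩ := hrange.superset hb
    exact ⟨(conjEquiv m g G).symm u, by rw [conjProd_eq_dmap, MulEquiv.apply_symm_apply]⟩
  have hηg : ∀ k : Multiplicative ℤ, η (g ^ (Multiplicative.toAdd k)) = k := fun k => by
    rw [map_zpow, hg, ← ofAdd_zsmul]
    simp
  have hη : ∀ p : WrZ ↥G m, η (thetaW m g G p) = p.right := fun p => by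
    rw [htheta, map_mul, MonoidHom.mem_ker.mp (hker _), hηg, one_mul]
  refine ⟨fun x y => ?_, ⟨fun x y hxy => ?_, fun b => ?_⟩, hη, Set.Subset.antisymm ?_ ?_⟩
  · have h := conj_zpow_conjProd m g G hmul (fun v hv => hcomm v (hGL hv))
      (Multiplicative.toAdd x.right) y.left
    simp only [htheta, SemidirectProduct.mul_left, SemidirectProduct.mul_right, hmul,
      zpowersHom_apply, toAdd_mul, zpow_add, ← h]
    group
  · have hr : x.right = y.right := by rw [← hη x, ← hη y, hxy]
    rw [htheta, htheta, hr] at hxy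
    exact SemidirectProduct.ext ((conjEquiv m g G).injective (hinj (mul_right_cancel hxy))) hr
  · obtain ⟨a, ha⟩ := honto (b * (g ^ (Multiplicative.toAdd (η b)))⁻¹) (by
      rw [MonoidHom.mem_ker, map_mul, map_inv, hηg, mul_inv_cancel])
    exact ⟨⟨a, η b⟩, by rw [htheta, ha, inv_mul_cancel_right]⟩
  · rintro _ ⟨p, hp, rfl⟩
    exact (hη p).trans hp
  · intro b hb
    obtain ⟨a, rfl⟩ := honto b hb
    exact ⟨⟨a, 1⟩, rfl, by simp [htheta]⟩
end

section
/- Let B be a group, η : B → ℤ a surjective homomorphism with kernel L, m ≥ 1, g ∈ B and G ≤ L satisfying: (a) η(g) = 1 and gᵐ commutes with every element of L; (b) L is the internal direct product of the subgroups Gᵢ := gⁱ G g⁻ⁱ, i = 0, …, m−1, so that θ : G ≀ₘ ℤ → B, θ(a; k) = (∏_{i=0}^{m−1} gⁱ a(i) g⁻ⁱ) · gᵏ, is a group isomorphism. Suppose in addition A is a normal subgroup of B such that: (c) η(A) = mℤ and gᵐ ∈ A; (d) the intersection K := A ∩ L is generated by the subgroups Pᵢ := gⁱ P g⁻ⁱ,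 i = 0, …, m−1, where P := A ∩ G. Then θ maps the subgroup (Fin m → P) × mℤ of G ≀ₘ ℤ onto A. -/
/-- An ordered product whose only possibly nontrivial factor is the `i`-th equals that factor. -/
theorem prod_ofFn_mulSingle {M : Type*} [Monoid M] {n : ℕ} (i : Fin n) (x : M) :
    (List.ofFn (Pi.mulSingle i x : Fin n → M)).prod = x := by
  induction n with
  | zero => exact i.elim0
  | succ n ih =>
    rw [List.ofFn_succ, List.prod_cons]
    cases i using Fin.cases with
    | zero => simp
    | succ i =>
      have h : (fun j : Fin n => (Pi.mulSingle i.succ x : Fin (n + 1) → M) j.succ) =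
          Pi.mulSingle i x := by
        funext j
        simp [Pi.mulSingle_apply]
      rw [h, ih, Pi.mulSingle_eq_of_ne (Fin.succ_ne_zero i).symm, one_mul]

/-- The restriction of `θ` to the base group `Fin m → G`, as a homomorphism. -/
def baseHom {B : Type*} [Group B] (m : ℕ) (g : B) (G : Subgroup B)
    (hhom : ∀ u v : ∀ i : Fin m, ↥(conjSub (g ^ (i : ℕ)) G),
      dmap m g G (u * v) = dmap m g G u * dmap m g G v) : (Fin m → ↥G) →* B :=
  (MonoidHom.mk' (dmap m g G) hhom).comp
    (MonoidHom.mk'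
      (fun a i => ⟨g ^ (i : ℕ) * a i * (g ^ (i : ℕ))⁻¹, a i, (a i).2, rfl⟩)
      (fun a b => by
        funext i
        apply Subtype.ext
        simp))

theorem baseHom_apply {B : Type*} [Group B] (m : ℕ) (g : B) (G : Subgroup B)
    (hhom : ∀ u v : ∀ i : Fin m, ↥(conjSub (g ^ (i : ℕ)) G),
      dmap m g G (u * v) = dmap m g G u * dmap m g G v) (a : Fin m → ↥G) :
    baseHom m g G hhom a =
      (List.ofFn fun i : Fin m => g ^ (i : ℕ) * (a i : B) * (g ^ (i : ℕ))⁻¹).prod :=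
  rfl

/-- The subgroup generated by the conjugates `gⁱ (A ⊓ G) g⁻ⁱ` lies in the image under `θ` of the
families in `Fin m → G` with all entries in `A`. -/
theorem iSup_conjSub_le_map_baseHom {B : Type*} [Group B] (m : ℕ) (g : B) (G A : Subgroup B)
    (hhom : ∀ u v : ∀ i : Fin m, ↥(conjSub (g ^ (i : ℕ)) G),
      dmap m g G (u * v) = dmap m g G u * dmap m g G v) :
    ⨆ i : Fin m, conjSub (g ^ (i : ℕ)) (A ⊓ G) ≤
      (Subgroup.pi Set.univ fun _ => A.subgroupOf G).map (baseHom m g G hhom) := by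
  refine iSup_le fun i => ?_
  rintro _ ⟨p, ⟨hpA, hpG⟩, rfl⟩
  refine ⟨Pi.mulSingle i ⟨p, hpG⟩, fun j _ => ?_, ?_⟩
  · change ((Pi.mulSingle i ⟨p, hpG⟩ : Fin m → ↥G) j : B) ∈ A
    rcases eq_or_ne j i with rfl | hj
    · simpa using hpA
    · simp [Pi.mulSingle_eq_of_ne hj]
  · rw [baseHom_apply]
    refine Eq.trans (congrArg (fun f => (List.ofFn f).prod) (funext fun j => ?_))
      (prod_ofFn_mulSingle i (g ^ (i : ℕ) * p * (g ^ (i : ℕ))⁻¹))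
    rcases eq_or_ne j i with rfl | hj
    · simp
    · simp [Pi.mulSingle_eq_of_ne hj]

/-- In the situation of Statement 4 (so that `θ : G ≀ₘ ℤ → B` is a group
isomorphism), let `A ⊴ B` be a normal subgroup with `η(A) = mℤ`, `gᵐ ∈ A`, and such that
`K = A ∩ L` is generated by the conjugates `Pᵢ = gⁱ P g⁻ⁱ` of `P = A ∩ G`. Then `θ` maps
the subgroup `(Fin m → P) × mℤ` of `G ≀ₘ ℤ` onto `A`. -/
theorem stmt_5 {B : Type*} [Group B] (η : B →* Multiplicative ℤ)
    (hsurj : Function.Surjective η) (m : ℕ) (hm : 1 ≤ m) [NeZero m] (g : B)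
    (hg : η g = Multiplicative.ofAdd 1)
    (hcomm : ∀ v ∈ η.ker, Commute (g ^ m) v)
    (G : Subgroup B) (hGL : G ≤ η.ker)
    (hhom : ∀ u v : ∀ i : Fin m, ↥(conjSub (g ^ (i : ℕ)) G),
      dmap m g G (u * v) = dmap m g G u * dmap m g G v)
    (hinj : Function.Injective (dmap m g G))
    (hrange : Set.range (dmap m g G) = (η.ker : Set B))
    (A : Subgroup B) (hA : A.Normal)
    (hAimg : A.map η = Subgroup.zpowers (Multiplicative.ofAdd (m : ℤ)))
    (hgmA : g ^ m ∈ A)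
    (hK : A ⊓ η.ker = ⨆ i : Fin m, conjSub (g ^ (i : ℕ)) (A ⊓ G)) :
    thetaW m g G ''
        {p : WrZ ↥G m | (∀ i : Fin m, (p.left i : B) ∈ A) ∧
          (m : ℤ) ∣ Multiplicative.toAdd p.right}
      = (A : Set B) := by
  ext x
  constructor
  · rintro ⟨p, ⟨hpA, k, hk⟩, rfl⟩
    refine A.mul_mem (A.list_prod_mem fun y hy => ?_) ?_
    · obtain ⟨i, rfl⟩ := (List.mem_ofFn' _ _).1 hy
      exact hA.conj_mem _ (hpA i) _
    · rw [hk, zpow_mul, zpow_natCast]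
      exact A.zpow_mem hgmA k
  · intro hx
    have hηx : η x ∈ Subgroup.zpowers (Multiplicative.ofAdd (m : ℤ)) :=
      hAimg ▸ Subgroup.mem_map_of_mem η hx
    obtain ⟨k, hk⟩ := Subgroup.mem_zpowers_iff.1 hηx
    have hxK : x * (g ^ ((m : ℤ) * k))⁻¹ ∈ A ⊓ η.ker := by
      refine Subgroup.mem_inf.2 ⟨A.mul_mem hx (A.inv_mem ?_), ?_⟩
      · rw [zpow_mul, zpow_natCast]
        exact A.zpow_mem hgmA k
      · rw [MonoidHom.mem_ker, map_mul, map_inv, map_zpow, hg, ← hk,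
          mul_inv_eq_one, ← ofAdd_zsmul, ← ofAdd_zsmul, smul_eq_mul, smul_eq_mul, mul_one, mul_comm]
    rw [hK] at hxK
    obtain ⟨a, ha, hax⟩ := iSup_conjSub_le_map_baseHom m g G A hhom hxK
    refine ⟨⟨a, Multiplicative.ofAdd ((m : ℤ) * k)⟩, ⟨fun i => ha i trivial, k, rfl⟩, ?_⟩
    exact mul_inv_eq_iff_eq_mul.1 hax.symm |>.symm
end

section
/- Let B be a group, η : B → ℤ a surjective homomorphism with kernel L, m ≥ 1, and g ∈ B such that: (a) η(g) = 1 and g^{2m} commutes with every element of L; (b) there is a subgroup H ≤ L with g⁻ᵐ H gᵐ = H, and γ : H → H denotes the automorphism γ(h) = g⁻ᵐ h gᵐ (so γ ∘ γ = id on H by (a)); (c) there is a subgroup G ≤ L such that L is the internal direct product of the subgroups Gᵢ := gⁱ G g⁻ⁱ, i = 0, …, 2m−1, together with Hⱼ := gʲ H g⁻ʲ, j = 0, …, m−1. Then the map θ : (G, H) ≀_{γ,m} ℤ → B defined by θ(a, b; k) = (∏_{i=0}^{2m−1} gⁱ a(i) g⁻ⁱ · ∏_{j=0}^{m−1} gʲ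 b(j) g⁻ʲ) · gᵏ is a group isomorphism; moreover η(θ(a,b;k)) = k, so θ maps ((Fin 2m → G) × (Fin m → H)) × {0} onto L. -/
instance twNeZero (m : ℕ) [NeZero m] : NeZero (2 * m) :=
  ⟨by have := NeZero.ne m; omega⟩

/-- The twisted shift automorphism `δ` of `(Fin (2m) → G) × (Fin m → H)`:
`δ(a,b) = (a', b')` with `a'(i) = a(i−1)` (mod 2m), `b'(j) = b(j−1)` for `j ≠ 0` and
`b'(0) = γ(b(m−1))`. -/
def twShift (G H : Type*) [Group G] [Group H] (m : ℕ) [NeZero m] (γ : MulAut H) :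
    MulAut ((Fin (2 * m) → G) × (Fin m → H)) where
  toFun p := (fun i => p.1 (i - 1),
              fun j => if j = 0 then γ (p.2 (j - 1)) else p.2 (j - 1))
  invFun p := (fun i => p.1 (i + 1),
              fun j => if j + 1 = 0 then γ.symm (p.2 (j + 1)) else p.2 (j + 1))
  left_inv p := by
    refine Prod.ext ?_ ?_
    · funext i; simp
    · funext j
      by_cases h : j + 1 = 0
      · simp [h, eq_neg_of_add_eq_zero_left h]
      · simp [h]
  right_inv p := by
    refine Prod.ext ?_ ?_
    · funext i; simp
    · funext j
      by_cases h : j = 0 <;> simp [h]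
  map_mul' p q := by
    refine Prod.ext ?_ ?_
    · rfl
    · funext j
      by_cases h : j = 0 <;> simp [h]

/-- The twisted wreath product `(G, H) ≀_{γ,m} ℤ = ((Fin 2m → G) × (Fin m → H)) ⋊_δ ℤ`. -/
abbrev TWrZ (G H : Type*) [Group G] [Group H] (m : ℕ) [NeZero m] (γ : MulAut H) :=
  ((Fin (2 * m) → G) × (Fin m → H))
    ⋊[zpowersHom (MulAut ((Fin (2 * m) → G) × (Fin m → H))) (twShift G H m γ)]
    Multiplicative ℤ

/-- The ordered-product map `(Π i, gⁱ G g⁻ⁱ) × (Π j, gʲ H g⁻ʲ) → B`,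
`(x, y) ↦ x₀⋯x_{2m−1} · y₀⋯y_{m−1}`. -/
def dmap2 {B : Type*} [Group B] (m : ℕ) (g : B) (G H : Subgroup B) :
    ((∀ i : Fin (2 * m), ↥(conjSub (g ^ (i : ℕ)) G)) ×
      (∀ j : Fin m, ↥(conjSub (g ^ (j : ℕ)) H))) → B :=
  fun u => (List.ofFn fun i => (u.1 i : B)).prod * (List.ofFn fun j => (u.2 j : B)).prod

/-- The map `θ : (G,H) ≀_{γ,m} ℤ → B`,
`θ(a, b; k) = (∏_{i<2m} gⁱ a(i) g⁻ⁱ · ∏_{j<m} gʲ b(j) g⁻ʲ) · gᵏ`. -/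
def thetaTW {B : Type*} [Group B] (m : ℕ) [NeZero m] (g : B) (G H : Subgroup B)
    (γ : MulAut ↥H) : TWrZ ↥G ↥H m γ → B :=
  fun p =>
    (List.ofFn fun i : Fin (2 * m) =>
        g ^ (i : ℕ) * ((p.left.1 i : B)) * (g ^ (i : ℕ))⁻¹).prod *
    (List.ofFn fun j : Fin m =>
        g ^ (j : ℕ) * ((p.left.2 j : B)) * (g ^ (j : ℕ))⁻¹).prod *
    g ^ (Multiplicative.toAdd p.right)

theorem List.prod_ofFn_eq_single {M : Type*} [Monoid M] {n : ℕ} (f : Fin n → M) (i : Fin n)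
    (h : ∀ k, k ≠ i → f k = 1) : (List.ofFn f).prod = f i := by
  induction n with
  | zero => exact i.elim0
  | succ n ih =>
    rw [List.ofFn_succ, List.prod_cons]
    cases i using Fin.cases with
    | zero =>
      have : (fun k : Fin n => f k.succ) = fun _ => 1 :=
        funext fun k => h _ (Fin.succ_ne_zero k)
      simp [this]
    | succ i =>
      rw [h 0 (Fin.succ_ne_zero i).symm, one_mul,
        ih (fun k => f k.succ) i fun k hk => h _ fun e => hk (Fin.succ_injective _ e)]

/-- The pair of families `(gⁱ a(i) g⁻ⁱ)ᵢ` and `(gʲ b(j) g⁻ʲ)ⱼ` attached to `(a, b)`. -/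
def conjFamily {B : Type*} [Group B] (m : ℕ) (g : B) (G H : Subgroup B) :
    ((Fin (2 * m) → ↥G) × (Fin m → ↥H)) ≃*
      ((∀ i : Fin (2 * m), ↥(conjSub (g ^ (i : ℕ)) G)) ×
        (∀ j : Fin m, ↥(conjSub (g ^ (j : ℕ)) H))) :=
  MulEquiv.prodCongr
    (MulEquiv.piCongrRight fun i : Fin (2 * m) => (MulAut.conj (g ^ (i : ℕ))).subgroupMap G)
    (MulEquiv.piCongrRight fun j : Fin m => (MulAut.conj (g ^ (j : ℕ))).subgroupMap H)

/-- The restriction of `thetaTW` to the base group, as a homomorphism. -/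
def thetaBase {B : Type*} [Group B] (m : ℕ) (g : B) (G H : Subgroup B)
    (hhom : ∀ u v, dmap2 m g G H (u * v) = dmap2 m g G H u * dmap2 m g G H v) :
    ((Fin (2 * m) → ↥G) × (Fin m → ↥H)) →* B :=
  (MonoidHom.mk' (dmap2 m g G H) hhom).comp (conjFamily m g G H).toMonoidHom

theorem MonoidHom.ext_prod {M N P : Type*} [MulOneClass M] [MulOneClass N] [MulOneClass P]
    {f f' : M × N →* P} (hl : f.comp (MonoidHom.inl M N) = f'.comp (MonoidHom.inl M N))
    (hr : f.comp (MonoidHom.inr M N) = f'.comp (MonoidHom.inr M N)) : f = f' := by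
  ext ⟨a, b⟩
  rw [← Prod.fst_mul_snd (a, b), map_mul, map_mul]
  exact congrArg₂ _ (DFunLike.congr_fun hl a) (DFunLike.congr_fun hr b)

section

variable {B : Type*} [Group B] {m : ℕ} {g : B} {G H : Subgroup B}
  (hhom : ∀ u v, dmap2 m g G H (u * v) = dmap2 m g G H u * dmap2 m g G H v)

theorem thetaBase_apply (p : (Fin (2 * m) → ↥G) × (Fin m → ↥H)) :
    thetaBase m g G H hhom p =
      (List.ofFn fun i : Fin (2 * m) => g ^ (i : ℕ) * (p.1 i : B) * (g ^ (i : ℕ))⁻¹).prod *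
      (List.ofFn fun j : Fin m => g ^ (j : ℕ) * (p.2 j : B) * (g ^ (j : ℕ))⁻¹).prod :=
  rfl

theorem thetaBase_mulSingle_left (i : Fin (2 * m)) (x : ↥G) :
    thetaBase m g G H hhom (Pi.mulSingle i x, 1) = g ^ (i : ℕ) * x * (g ^ (i : ℕ))⁻¹ := by
  rw [thetaBase_apply, List.prod_ofFn_eq_single _ i]
  · simp
  · intro k hk
    simp [Pi.mulSingle_eq_of_ne hk]

theorem thetaBase_mulSingle_right (j : Fin m) (x : ↥H) :
    thetaBase m g G H hhom (1, Pi.mulSingle j x) = g ^ (j : ℕ) * x * (g ^ (j : ℕ))⁻¹ := by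
  rw [thetaBase_apply, List.prod_ofFn_eq_single (n := m) _ j]
  · simp
  · intro k hk
    simp [Pi.mulSingle_eq_of_ne hk]

theorem twShift_mulSingle_left [NeZero m] {G H : Type*} [Group G] [Group H] (γ : MulAut H)
    (i : Fin (2 * m)) (x : G) :
    twShift G H m γ (Pi.mulSingle i x, 1) = (Pi.mulSingle (i + 1) x, 1) := by
  refine Prod.ext (funext fun k => ?_) (funext fun k => ?_)
  · simp [twShift, Pi.mulSingle_apply, sub_eq_iff_eq_add]
  · simp [twShift]

theorem twShift_mulSingle_right [NeZero m] {G H : Type*} [Group G] [Group H] (γ : MulAut H)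
    (j : Fin m) (x : H) :
    twShift G H m γ (1, Pi.mulSingle j x) =
      (1, Pi.mulSingle (j + 1) (if j + 1 = 0 then γ x else x)) := by
  refine Prod.ext (funext fun k => ?_) (funext fun k => ?_)
  · simp [twShift]
  · by_cases hk : k = j + 1
    · subst hk
      simp [twShift]
    · have hk' : k - 1 ≠ j := fun e => hk (sub_eq_iff_eq_add.mp e)
      simp [twShift, Pi.mulSingle_eq_of_ne hk, Pi.mulSingle_eq_of_ne hk']

theorem Fin.val_add_one_of_ne_zero {n : ℕ} [NeZero n] (i : Fin n) (h : i + 1 ≠ 0) :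
    ((i + 1 : Fin n) : ℕ) = i + 1 := by
  obtain ⟨n, rfl⟩ := Nat.exists_eq_succ_of_ne_zero (NeZero.ne n)
  rw [Fin.val_add_one, if_neg]
  rintro rfl
  exact h (Fin.last_add_one n)

theorem Fin.val_add_one_eq_of_add_one_eq_zero {n : ℕ} [NeZero n] (i : Fin n) (h : i + 1 = 0) :
    (i : ℕ) + 1 = n := by
  obtain ⟨n, rfl⟩ := Nat.exists_eq_succ_of_ne_zero (NeZero.ne n)
  have := congrArg Fin.val h
  rw [Fin.val_add_one] at this
  split_ifs at this with hi
  · simp [hi]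
  · simp at this

theorem thetaBase_twShift [NeZero m] (hG : ∀ x ∈ G, Commute (g ^ (2 * m)) x)
    (hH : ∀ x ∈ H, Commute (g ^ (2 * m)) x) (γ : MulAut ↥H)
    (hγ : ∀ h : ↥H, (γ h : B) = (g ^ m)⁻¹ * ↑h * g ^ m)
    (p : (Fin (2 * m) → ↥G) × (Fin m → ↥H)) :
    thetaBase m g G H hhom (twShift ↥G ↥H m γ p) = g * thetaBase m g G H hhom p * g⁻¹ := by
  suffices h : (thetaBase m g G H hhom).comp (twShift ↥G ↥H m γ).toMonoidHom =
      (MulAut.conj g).toMonoidHom.comp (thetaBase m g G H hhom) from DFunLike.congr_fun h p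
  refine MonoidHom.ext_prod (MonoidHom.pi_ext fun i x => ?_) (MonoidHom.pi_ext fun j x => ?_)
  · change thetaBase m g G H hhom (twShift ↥G ↥H m γ (Pi.mulSingle i x, 1)) =
      g * thetaBase m g G H hhom (Pi.mulSingle i x, 1) * g⁻¹
    rw [twShift_mulSingle_left, thetaBase_mulSingle_left, thetaBase_mulSingle_left]
    by_cases hi : i + 1 = 0
    · have hc : g ^ ((i : ℕ) + 1) * x = x * g ^ ((i : ℕ) + 1) := by
        rw [Fin.val_add_one_eq_of_add_one_eq_zero i hi]
        exact hG x x.2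
      calc _ = (x : B) := by simp [hi]
        _ = g ^ ((i : ℕ) + 1) * x * (g ^ ((i : ℕ) + 1))⁻¹ := by rw [hc, mul_inv_cancel_right]
        _ = _ := by rw [pow_succ']; group
    · rw [Fin.val_add_one_of_ne_zero i hi, pow_succ']
      group
  · change thetaBase m g G H hhom (twShift ↥G ↥H m γ (1, Pi.mulSingle j x)) =
      g * thetaBase m g G H hhom (1, Pi.mulSingle j x) * g⁻¹
    rw [twShift_mulSingle_right, thetaBase_mulSingle_right, thetaBase_mulSingle_right]
    by_cases hj : j + 1 = 0
    · have hc : g ^ m * (g ^ m * x) = x * (g ^ m * g ^ m) := by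
        rw [← mul_assoc, ← pow_add, ← two_mul]
        exact hH x x.2
      calc _ = (g ^ m)⁻¹ * (x * (g ^ m * g ^ m)) * (g ^ m)⁻¹ := by simp [hj, hγ, mul_assoc]
        _ = g ^ m * x * (g ^ m)⁻¹ := by rw [← hc]; simp [mul_assoc]
        _ = g ^ ((j : ℕ) + 1) * x * (g ^ ((j : ℕ) + 1))⁻¹ := by
          rw [Fin.val_add_one_eq_of_add_one_eq_zero j hj]
        _ = _ := by rw [pow_succ']; group
    · rw [if_neg hj, Fin.val_add_one_of_ne_zero j hj, pow_succ']
      group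

end

theorem map_zpow_mulAut_eq_conj {A B : Type*} [Group A] [Group B] (f : A →* B) (δ : MulAut A)
    (g : B) (h : ∀ p, f (δ p) = g * f p * g⁻¹) (n : ℤ) (p : A) :
    f ((δ ^ n) p) = g ^ n * f p * (g ^ n)⁻¹ := by
  induction n generalizing p with
  | zero => simp
  | succ n ih =>
    rw [zpow_add_one, MulAut.mul_apply, ih, h, zpow_add_one]
    group
  | pred n ih =>
    have h' : f p = g * f (δ⁻¹ p) * g⁻¹ := by rw [← h, MulAut.apply_inv_self]
    rw [zpow_sub_one, MulAut.mul_apply, ih, h', zpow_sub_one]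
    group

/-- Let `η : B → ℤ` be surjective with kernel `L`, `m ≥ 1`, `g ∈ B` with
`η g = 1` and `g^{2m}` commuting with `L`; let `H ≤ L` with `g⁻ᵐ H gᵐ = H` and
`γ : H → H`, `γ(h) = g⁻ᵐ h gᵐ`, the induced automorphism; and let `G ≤ L` be such that `L`
is the internal direct product of `Gᵢ = gⁱ G g⁻ⁱ` (`i < 2m`) and `Hⱼ = gʲ H g⁻ʲ` (`j < m`)
(the ordered-product map is an injective homomorphism with range `L`). Then
`θ : (G,H) ≀_{γ,m} ℤ → B` is a group isomorphism with `η (θ (a,b;k)) = k`, so `θ` maps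
`((Fin 2m → G) × (Fin m → H)) × {0}` onto `L`. -/
theorem stmt_6 {B : Type*} [Group B] (η : B →* Multiplicative ℤ)
    (hsurj : Function.Surjective η) (m : ℕ) (hm : 1 ≤ m) [NeZero m] (g : B)
    (hg : η g = Multiplicative.ofAdd 1)
    (hcomm : ∀ v ∈ η.ker, Commute (g ^ (2 * m)) v)
    (H : Subgroup B) (hHL : H ≤ η.ker)
    (γ : MulAut ↥H)
    (hγ : ∀ h : ↥H, (γ h : B) = (g ^ m)⁻¹ * ↑h * g ^ m)
    (G : Subgroup B) (hGL : G ≤ η.ker)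
    (hhom : ∀ u v, dmap2 m g G H (u * v) = dmap2 m g G H u * dmap2 m g G H v)
    (hinj : Function.Injective (dmap2 m g G H))
    (hrange : Set.range (dmap2 m g G H) = (η.ker : Set B)) :
    (∀ x y : TWrZ ↥G ↥H m γ,
        thetaTW m g G H γ (x * y) = thetaTW m g G H γ x * thetaTW m g G H γ y) ∧
    Function.Bijective (thetaTW m g G H γ) ∧
    (∀ p : TWrZ ↥G ↥H m γ, η (thetaTW m g G H γ p) = p.right) ∧
    thetaTW m g G H γ '' {p : TWrZ ↥G ↥H m γ | p.right = 1} = (η.ker : Set B) := by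
  set φ := thetaBase m g G H hhom
  have hφinj : Function.Injective φ := hinj.comp (conjFamily m g G H).injective
  have hφrange : Set.range φ = (η.ker : Set B) :=
    ((conjFamily m g G H).surjective.range_comp (dmap2 m g G H)).trans hrange
  have hφker (p) : η (φ p) = 1 := (hφrange.subset ⟨p, rfl⟩ : φ p ∈ (η.ker : Set B))
  have hθ (p : TWrZ ↥G ↥H m γ) :
      thetaTW m g G H γ p = φ p.left * g ^ Multiplicative.toAdd p.right := rfl
  have hηg (k : ℤ) : η (g ^ k) = Multiplicative.ofAdd k := by
    rw [map_zpow, hg, ← ofAdd_zsmul, smul_eq_mul, mul_one]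
  have hηθ (p : TWrZ ↥G ↥H m γ) : η (thetaTW m g G H γ p) = p.right := by
    rw [hθ, map_mul, hφker, one_mul, hηg, ofAdd_toAdd]
  have hδ := map_zpow_mulAut_eq_conj φ (twShift ↥G ↥H m γ) g
    (thetaBase_twShift hhom (fun x hx => hcomm x (hGL hx)) (fun x hx => hcomm x (hHL hx)) γ hγ)
  refine ⟨fun x y => ?_, ⟨fun x y hxy => ?_, fun b => ?_⟩, hηθ, Set.ext fun b => ⟨?_, fun hb => ?_⟩⟩
  · rw [hθ, hθ, hθ, SemidirectProduct.mul_left, SemidirectProduct.mul_right, map_mul,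
      zpowersHom_apply, hδ, toAdd_mul, zpow_add]
    group
  · have hr : x.right = y.right := by rw [← hηθ, hxy, hηθ]
    rw [hθ, hθ, hr] at hxy
    exact SemidirectProduct.ext (hφinj (mul_right_cancel hxy)) hr
  · have hb : b * (g ^ Multiplicative.toAdd (η b))⁻¹ ∈ (η.ker : Set B) := by
      rw [SetLike.mem_coe, MonoidHom.mem_ker, map_mul, map_inv, hηg, ofAdd_toAdd, mul_inv_cancel]
    obtain ⟨p, hp⟩ := hφrange.superset hb
    exact ⟨⟨p, η b⟩, by rw [hθ, hp, inv_mul_cancel_right]⟩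
  · rintro ⟨p, hp, rfl⟩
    exact (hηθ p).trans hp
  · obtain ⟨p, rfl⟩ := hφrange.superset hb
    exact ⟨⟨p, 1⟩, rfl, by simp [hθ]⟩
end

section
/- Let B be a group, η : B → ℤ a surjective homomorphism with kernel L, m ≥ 1, g ∈ B, and G, H ≤ L satisfying: (a) η(g) = 1 and g^{2m} commutes with every element of L; (b) g⁻ᵐ H gᵐ = H, with γ : H → H the automorphism γ(h) = g⁻ᵐ h gᵐ; (c) L is the internal direct product of Gᵢ := gⁱ G g⁻ⁱ, i = 0, …, 2m−1, and Hⱼ := gʲ H g⁻ʲ, j = 0, …, m−1, so that θ : (G, H) ≀_{γ,m} ℤ → B, θ(a,b;k) = (∏_{i=0}^{2m−1} gⁱ a(i) g⁻ⁱ · ∏_{j=0}^{m−1} gʲ b(j) g⁻ʲ) · gᵏ, is a group isomorphism. Suppose in addition A is a normal subgroup of B such that: (d) η(A) = 2mℤ and g^{2m} ∈ A; (e) K := A ∩ L is generated by the subgroups Pᵢ := gⁱ P g⁻ⁱ, i = 0, …, 2m−1, and Qⱼ := gʲ Q g⁻ʲ, j = 0, …, m−1, where P := A ∩ G and Q :=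 A ∩ H. Then θ maps the subgroup ((Fin 2m → P) × (Fin m → Q)) × 2mℤ onto A. -/
/-- An ordered product with at most one nontrivial factor equals that factor. -/
theorem List.prod_ofFn_eq_of_forall_ne {M : Type*} [Monoid M] {n : ℕ} (f : Fin n → M)
    (i : Fin n) (hf : ∀ j, j ≠ i → f j = 1) : (List.ofFn f).prod = f i := by
  induction n with
  | zero => exact i.elim0
  | succ n ih =>
    rw [List.ofFn_succ, List.prod_cons]
    induction i using Fin.cases with
    | zero =>
      rw [List.prod_eq_one, mul_one]
      intro x hx
      obtain ⟨j, rfl⟩ := (List.mem_ofFn' _ _).1 hx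
      exact hf _ (Fin.succ_ne_zero j)
    | succ i =>
      rw [hf 0 (Fin.succ_ne_zero i).symm, one_mul]
      exact ih (fun j => f j.succ) i fun j hj => hf _ fun h => hj (Fin.succ_injective _ h)

theorem Subgroup.prod_ofFn_mem {B : Type*} [Group B] (A : Subgroup B) {n : ℕ} {f : Fin n → B}
    (hf : ∀ i, f i ∈ A) : (List.ofFn f).prod ∈ A := by
  refine A.list_prod_mem fun x hx => ?_
  obtain ⟨j, rfl⟩ := (List.mem_ofFn' _ _).1 hx
  exact hf j

theorem mem_conjSub {B : Type*} [Group B] {g x : B} {S : Subgroup B} :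
    x ∈ conjSub g S ↔ ∃ s ∈ S, g * s * g⁻¹ = x := by
  simp [conjSub, Subgroup.mem_map]

theorem conjSub_mono {B : Type*} [Group B] (g : B) {S T : Subgroup B} (h : S ≤ T) :
    conjSub g S ≤ conjSub g T :=
  Subgroup.map_mono h

theorem conjSub_le_of_normal {B : Type*} [Group B] (g : B) {S A : Subgroup B} (hA : A.Normal)
    (h : S ≤ A) : conjSub g S ≤ A := by
  intro x hx
  obtain ⟨s, hs, rfl⟩ := mem_conjSub.1 hx
  exact hA.conj_mem s (h hs) g

theorem dmap2_mulSingle_fst {B : Type*} [Group B] (m : ℕ) (g : B) (G H : Subgroup B)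
    (i : Fin (2 * m)) (x : ↥(conjSub (g ^ (i : ℕ)) G)) :
    dmap2 m g G H (Pi.mulSingle i x, 1) = x := by
  simp only [dmap2, Pi.one_apply, OneMemClass.coe_one, List.ofFn_const, List.prod_replicate, one_pow, mul_one]
  rw [List.prod_ofFn_eq_of_forall_ne _ i fun j hj => by rw [Pi.mulSingle_eq_of_ne hj]; rfl,
    Pi.mulSingle_eq_same]

theorem dmap2_mulSingle_snd {B : Type*} [Group B] (m : ℕ) (g : B) (G H : Subgroup B)
    (j : Fin m) (x : ↥(conjSub (g ^ (j : ℕ)) H)) :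
    dmap2 m g G H (1, Pi.mulSingle j x) = x := by
  simp only [dmap2, Pi.one_apply, OneMemClass.coe_one, List.ofFn_const, List.prod_replicate, one_pow, one_mul]
  rw [List.prod_ofFn_eq_of_forall_ne _ j fun k hk => by rw [Pi.mulSingle_eq_of_ne hk]; rfl,
    Pi.mulSingle_eq_same]

/-- If `dmap2` is multiplicative, every element of the subgroup generated by the conjugates of
`A ⊓ G` and `A ⊓ H`, with `A` normal, is a `dmap2`-product of factors lying in `A`. -/
theorem exists_dmap2_eq_of_mem_iSup {B : Type*} [Group B] {m : ℕ} {g : B} {G H A : Subgroup B}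
    (hhom : ∀ u v, dmap2 m g G H (u * v) = dmap2 m g G H u * dmap2 m g G H v)
    (hA : A.Normal) {x : B}
    (hx : x ∈ (⨆ i : Fin (2 * m), conjSub (g ^ (i : ℕ)) (A ⊓ G)) ⊔
      (⨆ j : Fin m, conjSub (g ^ (j : ℕ)) (A ⊓ H))) :
    ∃ u, (∀ i, (u.1 i : B) ∈ A) ∧ (∀ j, (u.2 j : B) ∈ A) ∧ dmap2 m g G H u = x := by
  let φ := MonoidHom.mk' (dmap2 m g G H) hhom
  let S : Subgroup ((∀ i : Fin (2 * m), ↥(conjSub (g ^ (i : ℕ)) G)) ×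
      (∀ j : Fin m, ↥(conjSub (g ^ (j : ℕ)) H))) :=
    (Subgroup.pi Set.univ fun i : Fin (2 * m) => A.subgroupOf (conjSub (g ^ (i : ℕ)) G)).prod
      (Subgroup.pi Set.univ fun j : Fin m => A.subgroupOf (conjSub (g ^ (j : ℕ)) H))
  have hle : (⨆ i : Fin (2 * m), conjSub (g ^ (i : ℕ)) (A ⊓ G)) ⊔
      (⨆ j : Fin m, conjSub (g ^ (j : ℕ)) (A ⊓ H)) ≤ S.map φ := by
    refine sup_le (iSup_le fun i y hy => ?_) (iSup_le fun j y hy => ?_)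
    · have hyA := conjSub_le_of_normal _ hA inf_le_left hy
      refine ⟨(Pi.mulSingle i ⟨y, conjSub_mono _ inf_le_right hy⟩, 1), ⟨?_, one_mem _⟩,
        dmap2_mulSingle_fst m g G H i _⟩
      exact (Subgroup.mulSingle_mem_pi i _).2 fun _ => hyA
    · have hyA := conjSub_le_of_normal _ hA inf_le_left hy
      refine ⟨(1, Pi.mulSingle j ⟨y, conjSub_mono _ inf_le_right hy⟩), ⟨one_mem _, ?_⟩,
        dmap2_mulSingle_snd m g G H j _⟩
      exact (Subgroup.mulSingle_mem_pi j _).2 fun _ => hyA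
  obtain ⟨u, ⟨hu₁, hu₂⟩, rfl⟩ := hle hx
  exact ⟨u, fun i => hu₁ i trivial, fun j => hu₂ j trivial, rfl⟩

/-- In the situation of Statement 6 (so `θ : (G,H) ≀_{γ,m} ℤ → B` is a group
isomorphism), let `A ⊴ B` be normal with `η(A) = 2mℤ`, `g^{2m} ∈ A`, and such that
`K = A ∩ L` is generated by the conjugates `Pᵢ = gⁱ P g⁻ⁱ` (`i < 2m`) of `P = A ∩ G`
together with `Qⱼ = gʲ Q g⁻ʲ` (`j < m`) of `Q = A ∩ H`. Then `θ` maps the subgroup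
`((Fin 2m → P) × (Fin m → Q)) × 2mℤ` onto `A`. -/
theorem stmt_8 {B : Type*} [Group B] (η : B →* Multiplicative ℤ)
    (hsurj : Function.Surjective η) (m : ℕ) (hm : 1 ≤ m) [NeZero m] (g : B)
    (hg : η g = Multiplicative.ofAdd 1)
    (hcomm : ∀ v ∈ η.ker, Commute (g ^ (2 * m)) v)
    (H : Subgroup B) (hHL : H ≤ η.ker)
    (γ : MulAut ↥H)
    (hγ : ∀ h : ↥H, (γ h : B) = (g ^ m)⁻¹ * ↑h * g ^ m)
    (G : Subgroup B) (hGL : G ≤ η.ker)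
    (hhom : ∀ u v, dmap2 m g G H (u * v) = dmap2 m g G H u * dmap2 m g G H v)
    (hinj : Function.Injective (dmap2 m g G H))
    (hrange : Set.range (dmap2 m g G H) = (η.ker : Set B))
    (A : Subgroup B) (hA : A.Normal)
    (hAimg : A.map η = Subgroup.zpowers (Multiplicative.ofAdd ((2 * m : ℕ) : ℤ)))
    (hgA : g ^ (2 * m) ∈ A)
    (hK : A ⊓ η.ker =
      (⨆ i : Fin (2 * m), conjSub (g ^ (i : ℕ)) (A ⊓ G)) ⊔
      (⨆ j : Fin m, conjSub (g ^ (j : ℕ)) (A ⊓ H))) :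
    thetaTW m g G H γ ''
        {p : TWrZ ↥G ↥H m γ |
          (∀ i : Fin (2 * m), (p.left.1 i : B) ∈ A) ∧
          (∀ j : Fin m, (p.left.2 j : B) ∈ A) ∧
          ((2 * m : ℕ) : ℤ) ∣ Multiplicative.toAdd p.right}
      = (A : Set B) := by
  apply Set.Subset.antisymm
  · rintro _ ⟨p, ⟨hG, hH, k, hk⟩, rfl⟩
    refine mul_mem (mul_mem (A.prod_ofFn_mem fun i => hA.conj_mem _ (hG i) _)
      (A.prod_ofFn_mem fun j => hA.conj_mem _ (hH j) _)) ?_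
    rw [hk, zpow_mul, zpow_natCast]
    exact zpow_mem hgA k
  · intro x hx
    obtain ⟨k, hk⟩ : η x ∈ Subgroup.zpowers (Multiplicative.ofAdd ((2 * m : ℕ) : ℤ)) :=
      hAimg ▸ Subgroup.mem_map_of_mem η hx
    have hk' : η ((g ^ (2 * m)) ^ k) = η x := by
      rw [← hk, map_zpow, map_pow, hg, ← ofAdd_nsmul, nsmul_one]
    have hxK : x * ((g ^ (2 * m)) ^ k)⁻¹ ∈ A ⊓ η.ker :=
      Subgroup.mem_inf.2 ⟨mul_mem hx (inv_mem (zpow_mem hgA k)), by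
        rw [MonoidHom.mem_ker, map_mul, map_inv, hk', mul_inv_cancel]⟩
    rw [hK] at hxK
    obtain ⟨u, hu₁, hu₂, hu⟩ := exists_dmap2_eq_of_mem_iSup hhom hA hxK
    choose a haG ha using fun i => mem_conjSub.1 (u.1 i).2
    choose b hbH hb using fun j => mem_conjSub.1 (u.2 j).2
    refine ⟨⟨(fun i => ⟨a i, haG i⟩, fun j => ⟨b j, hbH j⟩),
      Multiplicative.ofAdd (((2 * m : ℕ) : ℤ) * k)⟩, ⟨fun i => ?_, fun j => ?_, k, rfl⟩, ?_⟩
    · simpa [← ha i, mul_assoc] using hA.conj_mem _ (hu₁ i) (g ^ (i : ℕ))⁻¹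
    · simpa [← hb j, mul_assoc] using hA.conj_mem _ (hu₂ j) (g ^ (j : ℕ))⁻¹
    · simp only [dmap2] at hu
      simp only [thetaTW, ha, hb, hu, toAdd_ofAdd, zpow_mul, zpow_natCast, inv_mul_cancel_right]
end

section
/- Let Y be a set, let ν : Y × Bool → Y × Bool be the involution ν(y, ε) = (y, ¬ε), let b ≥ 1, and let σ be a bijection of Y × Bool such that σ ∘ ν = ν ∘ σ, σ^b = id, and for every k with 1 ≤ k ≤ b−1 the map σ^k has no fixed point. Then for every (y, ε) ∈ Y × Bool exactly one of the following holds: (T1) the first components of the b points (y,ε), σ(y,ε), σ²(y,ε), …, σ^{b−1}(y,ε) are pairwise distinct; or (T2) b is even, say b = 2m, σ^m(y, ε) = (y, ¬ε), and the first components of the m points (y,ε), σ(y,ε), …, σ^{m−1}(y,ε) are pairwise distinct. -/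
/-- Powers of a permutation commuting with the involution `(y, ε) ↦ (y, ¬ε)` commute with it. -/
theorem perm_pow_apply_flip {Y : Type*} {σ : Equiv.Perm (Y × Bool)}
    (hcomm : ∀ q : Y × Bool, σ (q.1, !q.2) = ((σ q).1, !(σ q).2)) (n : ℕ) (q : Y × Bool) :
    (σ ^ n) (q.1, !q.2) = (((σ ^ n) q).1, !((σ ^ n) q).2) := by
  induction n with
  | zero => rfl
  | succ n ih => rw [pow_succ', Equiv.Perm.mul_apply, ih, hcomm, Equiv.Perm.mul_apply]

/-- If two points of an orbit, fewer than `b` steps apart, have the same first component, then they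
are half a period apart and `σ ^ (j - i)` acts on the orbit as the flip. -/
theorem half_period_of_fst_eq {Y : Type*} {b : ℕ} {σ : Equiv.Perm (Y × Bool)}
    (hcomm : ∀ q : Y × Bool, σ (q.1, !q.2) = ((σ q).1, !(σ q).2))
    (hord : σ ^ b = 1)
    (hfree : ∀ k : ℕ, 1 ≤ k → k ≤ b - 1 → ∀ q : Y × Bool, (σ ^ k) q ≠ q)
    {p : Y × Bool} {i j : ℕ} (hij : i < j) (hjb : j < b)
    (h : ((σ ^ i) p).1 = ((σ ^ j) p).1) :
    b = 2 * (j - i) ∧ (σ ^ (j - i)) p = (p.1, !p.2) := by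
  obtain ⟨d, rfl⟩ := Nat.exists_eq_add_of_lt hij
  rw [show i + d + 1 - i = d + 1 by omega]
  rw [add_assoc, pow_add, Equiv.Perm.mul_apply] at h
  have hflip : (σ ^ (d + 1)) p = (p.1, !p.2) := by
    apply (σ ^ i).injective
    rw [perm_pow_apply_flip hcomm]
    refine Prod.ext h.symm ?_
    by_contra hne
    refine hfree (d + 1) (by omega) (by omega) p ((σ ^ i).injective (Prod.ext h.symm ?_))
    simpa using hne
  have hdouble : (σ ^ (2 * (d + 1))) p = p := by
    rw [two_mul, pow_add, Equiv.Perm.mul_apply, hflip, perm_pow_apply_flip hcomm, hflip]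
    simp
  refine ⟨?_, hflip⟩
  rcases lt_trichotomy b (2 * (d + 1)) with hlt | heq | hgt
  · obtain ⟨e, he⟩ := Nat.exists_eq_add_of_lt hlt
    rw [he, add_assoc, pow_add, hord, one_mul] at hdouble
    exact absurd hdouble (hfree (e + 1) (by omega) (by omega) p)
  · exact heq
  · exact absurd hdouble (hfree _ (by omega) (by omega) p)

/-- Let `σ` be a bijection of `Y × Bool` commuting with the involution
`ν(y,ε) = (y,¬ε)`, with `σ^b = id` (`b ≥ 1`) and such that `σ^k` is fixed-point free for
`1 ≤ k ≤ b−1`. Then every point `p` satisfies exactly one of: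
(T1) the first components of `p, σp, …, σ^{b−1}p` are pairwise distinct; or
(T2) `b = 2m` is even, `σ^m p = ν p`, and the first components of `p, σp, …, σ^{m−1}p`
are pairwise distinct. -/
theorem stmt_10 {Y : Type*} (b : ℕ) (hb : 1 ≤ b) (σ : Equiv.Perm (Y × Bool))
    (hcomm : ∀ q : Y × Bool, σ (q.1, !q.2) = ((σ q).1, !(σ q).2))
    (hord : σ ^ b = 1)
    (hfree : ∀ k : ℕ, 1 ≤ k → k ≤ b - 1 → ∀ q : Y × Bool, (σ ^ k) q ≠ q) :
    ∀ p : Y × Bool,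
      Xor'
        (Function.Injective fun k : Fin b => ((σ ^ (k : ℕ)) p).1)
        (∃ m : ℕ, b = 2 * m ∧ (σ ^ m) p = (p.1, !p.2) ∧
          Function.Injective fun k : Fin m => ((σ ^ (k : ℕ)) p).1) := by
  intro p
  have collision {n : ℕ} (hn : n ≤ b)
      (hinj : ¬ Function.Injective fun k : Fin n => ((σ ^ (k : ℕ)) p).1) :
      ∃ d < n, b = 2 * d ∧ (σ ^ d) p = (p.1, !p.2) := by
    simp only [Function.Injective, not_forall] at hinj
    obtain ⟨i, j, h, hne⟩ := hinj
    rcases lt_or_gt_of_ne hne with hlt | hlt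
    · exact ⟨j - i, by omega, half_period_of_fst_eq hcomm hord hfree hlt (by omega) h⟩
    · exact ⟨i - j, by omega, half_period_of_fst_eq hcomm hord hfree hlt (by omega) h.symm⟩
  by_cases hinj : Function.Injective fun k : Fin b => ((σ ^ (k : ℕ)) p).1
  · refine Or.inl ⟨hinj, ?_⟩
    rintro ⟨m, hm, hflip, -⟩
    have h := @hinj ⟨0, by omega⟩ ⟨m, by omega⟩ (by simp [hflip])
    rw [Fin.mk.injEq] at h
    omega
  · refine Or.inr ⟨?_, hinj⟩
    obtain ⟨m, -, hm, hflip⟩ := collision le_rfl hinj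
    refine ⟨m, hm, hflip, ?_⟩
    by_contra hinj'
    obtain ⟨d, hd, hbd, -⟩ := collision (by omega) hinj'
    omega
end

section
/- Let g ∈ ℝ[x, y] be a squarefree homogeneous polynomial of degree d ≥ 2. Then the partial derivatives ∂g/∂x and ∂g/∂y are relatively prime in ℝ[x, y], i.e. every common divisor of ∂g/∂x and ∂g/∂y is a unit. -/
open MvPolynomial

namespace MvPolynomial

variable {σ R : Type*}

/-- In characteristic zero, a nonzero polynomial dividing its partial derivative with respect to a
variable does not involve that variable. -/
theorem degreeOf_eq_zero_of_dvd_pderiv [CommRing R] [IsDomain R] [CharZero R]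
    {p : MvPolynomial σ R} (hp : p ≠ 0) {i : σ} (h : p ∣ pderiv i p) : degreeOf i p = 0 := by
  by_contra hpos
  have hlt : degreeOf i (pderiv i p) < degreeOf i p := by
    rw [degreeOf_lt_iff (Nat.pos_of_ne_zero hpos)]
    intro m hm
    rw [mem_support_iff, coeff_pderiv] at hm
    have := monomial_le_degreeOf i (mem_support_iff.2 (left_ne_zero_of_mul hm))
    simp only [Finsupp.add_apply, Finsupp.single_eq_same] at this
    omega
  have hne : pderiv i p ≠ 0 := by
    obtain ⟨m, hm, hmi⟩ := Finset.exists_mem_eq_sup p.support (support_nonempty.2 hp) fun m => m i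
    rw [← degreeOf_eq_sup] at hmi
    have hle : Finsupp.single i 1 ≤ m := by
      rw [Finsupp.single_le_iff]
      omega
    intro h0
    have hc := congrArg (coeff (m - Finsupp.single i 1)) h0
    rw [coeff_pderiv, tsub_add_cancel_of_le hle, coeff_zero] at hc
    exact mul_ne_zero (mem_support_iff.1 hm) (Nat.cast_add_one_ne_zero _) hc
  obtain ⟨q, hq⟩ := h
  have hq0 : q ≠ 0 := by
    rintro rfl
    exact hne (by simpa using hq)
  rw [hq, degreeOf_mul_eq hp hq0] at hlt
  omega

/-- Over a field of characteristic zero, a nonzero polynomial dividing all of its partial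
derivatives is a unit. -/
theorem isUnit_of_forall_dvd_pderiv [Field R] [CharZero R] {p : MvPolynomial σ R} (hp : p ≠ 0)
    (h : ∀ i, p ∣ pderiv i p) : IsUnit p := by
  have hC : p = C (coeff 0 p) := by
    rw [← totalDegree_eq_zero_iff_eq_C, totalDegree_eq_zero_iff]
    intro m hm i
    have := monomial_le_degreeOf i hm
    rwa [degreeOf_eq_zero_of_dvd_pderiv hp (h i), Nat.le_zero] at this
  rw [hC] at hp ⊢
  exact (isUnit_iff_ne_zero.2 fun h0 => hp (by rw [h0, C_0])).map C

/-- The partial derivatives of a squarefree homogeneous polynomial of positive degree over a field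
of characteristic zero have no common divisors other than units. -/
theorem IsHomogeneous.isUnit_of_forall_dvd_pderiv [Fintype σ] [Field R] [CharZero R]
    {g : MvPolynomial σ R} {d : ℕ} (hg : g.IsHomogeneous d) (hd : d ≠ 0) (hsf : Squarefree g)
    {h : MvPolynomial σ R} (hdvd : ∀ i, h ∣ pderiv i g) : IsUnit h := by
  have hdvd_g : ∀ {q : MvPolynomial σ R}, (∀ i, q ∣ pderiv i g) → q ∣ g := by
    intro q hq
    have hunit : IsUnit ((d : ℕ) : MvPolynomial σ R) := by
      rw [← map_natCast (C : R →+* MvPolynomial σ R)]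
      exact (isUnit_iff_ne_zero.2 (Nat.cast_ne_zero.2 hd)).map C
    rw [← hunit.dvd_mul_left, ← nsmul_eq_mul, ← hg.sum_X_mul_pderiv]
    exact Finset.dvd_sum fun i _ => (hq i).mul_left _
  have h0 : h ≠ 0 := ne_zero_of_dvd_ne_zero hsf.ne_zero (hdvd_g hdvd)
  by_contra hunit
  obtain ⟨p, hp, hph⟩ := WfDvdMonoid.exists_irreducible_factor hunit h0
  obtain ⟨q, rfl⟩ := hdvd_g fun i => hph.trans (hdvd i)
  have hpq : ¬ p ∣ q := fun hpq => hp.not_isUnit (hsf p (mul_dvd_mul_left p hpq))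
  refine hp.not_isUnit (MvPolynomial.isUnit_of_forall_dvd_pderiv hp.ne_zero fun i => ?_)
  have hi := hph.trans (hdvd i)
  rw [pderiv_mul, dvd_add_left (dvd_mul_right _ _)] at hi
  exact (hp.prime.dvd_or_dvd hi).resolve_right hpq

end MvPolynomial

/-- If `g ∈ ℝ[x,y]` is a squarefree homogeneous polynomial of degree `d ≥ 2`,
then its formal partial derivatives are relatively prime: every common divisor is a unit. -/
theorem stmt_12 (g : MvPolynomial (Fin 2) ℝ) (d : ℕ) (hd : 2 ≤ d)
    (hsf : Squarefree g) (hhom : g.IsHomogeneous d) :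
    ∀ h : MvPolynomial (Fin 2) ℝ,
      h ∣ pderiv (0 : Fin 2) g → h ∣ pderiv (1 : Fin 2) g → IsUnit h := by
  intro h hx hy
  exact hhom.isUnit_of_forall_dvd_pderiv (by omega) hsf (Fin.forall_fin_two.2 ⟨hx, hy⟩)
end

section
/- Let A, B ∈ ℝ[x, y] be nonzero homogeneous polynomials of the same degree k that are relatively prime in ℝ[x, y]. Then there exists m ≥ 1 and polynomials P, Q ∈ ℝ[x, y] such that A·P + B·Q = x^m; equivalently, x^m lies in the ideal of ℝ[x, y] generated by A and B. Similarly, there exists m' ≥ 1 with y^{m'} in the ideal generated by A and B. -/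
open MvPolynomial

/-- Dehomogenizing a homogeneous bivariate polynomial of degree `k` gives degree at most `k`. -/
lemma natDegree_aeval_X_one_le {R : Type*} [CommSemiring R] {A : MvPolynomial (Fin 2) R} {k : ℕ}
    (hA : A.IsHomogeneous k) : (aeval ![Polynomial.X, 1] A : Polynomial R).natDegree ≤ k := by
  rw [A.as_sum, aeval_sum]
  refine Polynomial.natDegree_sum_le_of_forall_le _ _ fun m hm ↦ ?_
  obtain rfl : m.weight 1 = k := hA <| by simpa using hm
  rw [aeval_monomial, ← Polynomial.C_eq_algebraMap]
  refine (Polynomial.natDegree_C_mul_le _ _).trans ?_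
  simp only [Finsupp.prod_fintype, Finsupp.weight_apply, Finsupp.sum_fintype, Fin.prod_univ_two,
    Fin.sum_univ_two, pow_zero, implies_true, Matrix.cons_val_zero, Matrix.cons_val_one,
    one_pow, mul_one, Pi.one_apply, smul_eq_mul]
  exact (Polynomial.natDegree_X_pow_le _).trans (Nat.le_add_right _ _)

/-- The homogenization of a divisor of the dehomogenization of `A` divides `A`. -/
lemma homogenize_dvd_of_dvd_aeval {R : Type*} [CommSemiring R] [NoZeroDivisors R]
    {A : MvPolynomial (Fin 2) R} {k : ℕ} (hA : A.IsHomogeneous k) {g : Polynomial R}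
    (hg : g ∣ aeval ![Polynomial.X, 1] A) : g.homogenize g.natDegree ∣ A := by
  obtain ⟨r, hr⟩ := hg
  have hk := natDegree_aeval_X_one_le hA
  rw [← Polynomial.homogenize_eq_of_isHomogeneous hA rfl]
  rw [hr] at hk ⊢
  by_cases h0 : g * r = 0
  · simp [h0]
  rw [Polynomial.natDegree_mul (left_ne_zero_of_mul h0) (right_ne_zero_of_mul h0)] at hk
  obtain ⟨n, rfl⟩ := Nat.exists_eq_add_of_le ((Nat.le_add_right _ _).trans hk)
  rw [Polynomial.homogenize_mul _ _ le_rfl (Nat.add_le_add_iff_left.mp hk)]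
  exact dvd_mul_right _ _

/-- The ideal generated by two relatively prime homogeneous bivariate polynomials contains a
positive power of the second variable. -/
lemma exists_X_one_pow_mem_span_pair {K : Type*} [Field K] {A B : MvPolynomial (Fin 2) K} {k : ℕ}
    (hA : A.IsHomogeneous k) (hB : B.IsHomogeneous k) (hcop : IsRelPrime A B) :
    ∃ m : ℕ, 1 ≤ m ∧ X 1 ^ m ∈ Ideal.span ({A, B} : Set (MvPolynomial (Fin 2) K)) := by
  have hab : IsCoprime (aeval ![Polynomial.X, 1] A : Polynomial K)
      (aeval ![Polynomial.X, 1] B) := by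
    refine IsRelPrime.isCoprime fun g hgA hgB ↦ ?_
    have hu := hcop (homogenize_dvd_of_dvd_aeval hA hgA) (homogenize_dvd_of_dvd_aeval hB hgB)
    simpa using hu.map (aeval ![Polynomial.X, 1] : MvPolynomial (Fin 2) K →ₐ[K] Polynomial K)
  obtain ⟨u, v, huv⟩ := hab
  set N := max u.natDegree v.natDegree
  have hN : u.homogenize N * A + v.homogenize N * B = X 1 ^ (N + k) := by
    nth_rewrite 1 [← Polynomial.homogenize_eq_of_isHomogeneous hA rfl]
    nth_rewrite 1 [← Polynomial.homogenize_eq_of_isHomogeneous hB rfl]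
    rw [← Polynomial.homogenize_mul _ _ (le_max_left _ _) (natDegree_aeval_X_one_le hA),
      ← Polynomial.homogenize_mul _ _ (le_max_right _ _) (natDegree_aeval_X_one_le hB),
      ← Polynomial.homogenize_add, huv, Polynomial.homogenize_one]
  refine ⟨N + k + 1, Nat.le_add_left _ _, ?_⟩
  rw [pow_succ]
  exact Ideal.mul_mem_right _ _ (Ideal.mem_span_pair.mpr ⟨_, _, hN⟩)

/-- The ideal generated by two relatively prime homogeneous bivariate polynomials contains a
positive power of the first variable. -/
lemma exists_X_zero_pow_mem_span_pair {K : Type*} [Field K] {A B : MvPolynomial (Fin 2) K} {k : ℕ}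
    (hA : A.IsHomogeneous k) (hB : B.IsHomogeneous k) (hcop : IsRelPrime A B) :
    ∃ m : ℕ, 1 ≤ m ∧ X 0 ^ m ∈ Ideal.span ({A, B} : Set (MvPolynomial (Fin 2) K)) := by
  let e := renameEquiv K (Equiv.swap (0 : Fin 2) 1)
  have hcop' : IsRelPrime (e A) (e B) := fun d hdA hdB ↦ by
    have hu : IsUnit (e.symm d) :=
      hcop (by simpa using map_dvd e.symm hdA) (by simpa using map_dvd e.symm hdB)
    simpa using hu.map e
  obtain ⟨m, hm, hmem⟩ := exists_X_one_pow_mem_span_pair (A := e A) (B := e B)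
    hA.rename_isHomogeneous hB.rename_isHomogeneous hcop'
  obtain ⟨P, Q, hPQ⟩ := Ideal.mem_span_pair.mp hmem
  refine ⟨m, hm, Ideal.mem_span_pair.mpr ⟨e.symm P, e.symm Q, ?_⟩⟩
  apply e.injective
  have hX : e (X 0) = X 1 := by simp [e]
  simpa only [map_add, map_mul, map_pow, AlgEquiv.apply_symm_apply, hX] using hPQ

/-- If `A, B ∈ ℝ[x,y]` are nonzero relatively prime homogeneous polynomials
of the same degree `k`, then some power `x^m` (with `m ≥ 1`) can be written as `A·P + B·Q`,
i.e. lies in the ideal generated by `A` and `B`; similarly some power `y^{m'}` lies in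
that ideal. -/
theorem stmt_14 (A B : MvPolynomial (Fin 2) ℝ) (k : ℕ)
    (hA0 : A ≠ 0) (hB0 : B ≠ 0)
    (hA : A.IsHomogeneous k) (hB : B.IsHomogeneous k)
    (hcop : ∀ d : MvPolynomial (Fin 2) ℝ, d ∣ A → d ∣ B → IsUnit d) :
    (∃ m : ℕ, 1 ≤ m ∧ (∃ P Q : MvPolynomial (Fin 2) ℝ, A * P + B * Q = X 0 ^ m) ∧
      X 0 ^ m ∈ Ideal.span ({A, B} : Set (MvPolynomial (Fin 2) ℝ))) ∧
    (∃ m' : ℕ, 1 ≤ m' ∧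
      X 1 ^ m' ∈ Ideal.span ({A, B} : Set (MvPolynomial (Fin 2) ℝ))) := by
  have hrel : IsRelPrime A B := fun d hdA hdB ↦ hcop d hdA hdB
  refine ⟨?_, exists_X_one_pow_mem_span_pair hA hB hrel⟩
  obtain ⟨m, hm, hmem⟩ := exists_X_zero_pow_mem_span_pair hA hB hrel
  obtain ⟨P, Q, hPQ⟩ := Ideal.mem_span_pair.mp hmem
  exact ⟨m, hm, ⟨P, Q, by rw [mul_comm A, mul_comm B, hPQ]⟩, hmem⟩
end

section
/- Let g ∈ ℝ[x, y] be a squarefree homogeneous polynomial of degree d ≥ 2. Then the quotient ring ℝ[x, y] / J(g) is a finite-dimensional vector space over ℝ, where J(g) is the Jacobian ideal of g. -/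
open MvPolynomial

namespace MvPolynomial

variable {σ R K : Type*}

theorem totalDegree_pderiv_lt [CommSemiring R] {p : MvPolynomial σ R} {i : σ}
    (h : pderiv i p ≠ 0) : (pderiv i p).totalDegree < p.totalDegree := by
  obtain ⟨m, hm, hdeg⟩ := Finset.exists_mem_eq_sup _ (support_nonempty.mpr h)
    fun m ↦ m.sum fun _ e ↦ e
  change totalDegree _ = _ at hdeg
  rw [hdeg]
  rw [mem_support_iff, coeff_pderiv] at hm
  have hle := le_totalDegree (mem_support_iff.mpr (left_ne_zero_of_mul hm))
  rw [Finsupp.sum_add_index' (by simp) (by simp), Finsupp.sum_single_index rfl] at hle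
  omega

theorem pderiv_eq_zero_of_dvd_pderiv [CommRing R] [IsDomain R] {p : MvPolynomial σ R} {i : σ}
    (h : p ∣ pderiv i p) : pderiv i p = 0 := by
  by_contra h0
  exact (totalDegree_pderiv_lt h0).not_ge (totalDegree_le_of_dvd_of_isDomain h h0)

theorem eq_C_of_forall_pderiv_eq_zero [CommRing R] [IsDomain R] [CharZero R]
    {p : MvPolynomial σ R} (h : ∀ i, pderiv i p = 0) : p = C (coeff 0 p) := by
  classical
  ext m
  rw [coeff_C]
  split_ifs with hm
  · rw [hm]
  obtain ⟨i, hi⟩ := Finsupp.ne_iff.mp (Ne.symm hm)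
  have hle : Finsupp.single i 1 ≤ m := by
    rw [Finsupp.single_le_iff]
    exact Nat.one_le_iff_ne_zero.mpr hi
  have hc := congrArg (coeff (m - Finsupp.single i 1)) (h i)
  rw [coeff_pderiv, tsub_add_cancel_of_le hle, coeff_zero] at hc
  exact (mul_eq_zero.mp hc).resolve_right (Nat.cast_add_one_ne_zero _)

theorem exists_not_dvd_pderiv_of_irreducible [Field K] [CharZero K] {p : MvPolynomial σ K}
    (hp : Irreducible p) : ∃ i, ¬ p ∣ pderiv i p := by
  by_contra! h
  have hC := eq_C_of_forall_pderiv_eq_zero fun i ↦ pderiv_eq_zero_of_dvd_pderiv (h i)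
  have h0 : coeff 0 p ≠ 0 := fun h0 ↦ hp.ne_zero (by rw [hC, h0, C_0])
  exact hp.not_isUnit (hC ▸ (IsUnit.mk0 _ h0).map C)

/-- A squarefree polynomial in characteristic zero has no irreducible factor in common with all of
its partial derivatives. -/
theorem exists_not_dvd_pderiv_of_squarefree [Field K] [CharZero K] {p g : MvPolynomial σ K}
    (hg : Squarefree g) (hp : Irreducible p) (hpg : p ∣ g) : ∃ i, ¬ p ∣ pderiv i g := by
  obtain ⟨i, hi⟩ := exists_not_dvd_pderiv_of_irreducible hp
  obtain ⟨h, rfl⟩ := hpg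
  refine ⟨i, fun hdvd ↦ ?_⟩
  rw [pderiv_mul, dvd_add_left (dvd_mul_right _ _)] at hdvd
  obtain hd | ⟨k, rfl⟩ := hp.prime.dvd_or_dvd hdvd
  · exact hi hd
  · exact hp.not_isUnit (hg p ⟨k, (mul_assoc _ _ _).symm⟩)

/-- In two variables over a field, a prime ideal strictly containing a nonzero prime ideal is
maximal. -/
theorem isMaximal_of_bot_lt_of_lt [Field K] {P Q : Ideal (MvPolynomial (Fin 2) K)} [hP : P.IsPrime]
    [hQ : Q.IsPrime] (h0 : ⊥ < P) (hPQ : P < Q) : Q.IsMaximal := by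
  obtain ⟨M, hM, hQM⟩ := Q.exists_le_maximal hQ.ne_top
  obtain rfl | hlt := hQM.eq_or_lt
  · exact hM
  let s : LTSeries (PrimeSpectrum (MvPolynomial (Fin 2) K)) :=
    { length := 3
      toFun := ![⟨⊥, Ideal.isPrime_bot⟩, ⟨P, hP⟩, ⟨Q, hQ⟩, ⟨M, hM.isPrime⟩]
      step := by
        intro i
        fin_cases i
        exacts [h0, hPQ, hlt] }
  have hs : ((3 : ℕ) : WithBot ℕ∞) ≤ ringKrullDim (MvPolynomial (Fin 2) K) :=
    Order.LTSeries.length_le_krullDim s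
  rw [MvPolynomial.ringKrullDim_of_isNoetherianRing, ringKrullDim_eq_zero_of_field, zero_add,
    Nat.card_fin] at hs
  exact absurd (Nat.cast_le.mp hs) (by norm_num)

/-- Two polynomials in two variables over a field without common irreducible factor, not both zero,
generate an ideal of finite codimension. -/
theorem finite_quotient_span_pair [Field K] {f₁ f₂ : MvPolynomial (Fin 2) K}
    (h0 : f₁ ≠ 0 ∨ f₂ ≠ 0) (h : ∀ p, Irreducible p → p ∣ f₁ → ¬ p ∣ f₂) :
    Module.Finite K (MvPolynomial (Fin 2) K ⧸ Ideal.span {f₁, f₂}) := by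
  rw [Module.finite_iff_krullDimLE_zero, Ring.krullDimLE_zero_iff]
  intro I hI
  let J := Ideal.span {f₁, f₂}
  let P := I.comap (Ideal.Quotient.mk J)
  have hJP : J ≤ P := by
    rw [← Ideal.mk_ker (I := J)]
    exact Ideal.comap_mono bot_le
  have h₁ : f₁ ∈ P := hJP (Ideal.subset_span (by simp))
  have h₂ : f₂ ∈ P := hJP (Ideal.subset_span (by simp))
  have hP : P.IsPrime := Ideal.comap_isPrime _ _
  have hPbot : P ≠ ⊥ := by
    intro hbot
    rw [hbot, Ideal.mem_bot] at h₁ h₂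
    tauto
  obtain ⟨p, hpP, hp⟩ := hP.exists_mem_prime_of_ne_bot hPbot
  have : (Ideal.span {p}).IsPrime := (Ideal.span_singleton_prime hp.ne_zero).mpr hp
  have hlt : Ideal.span {p} < P := by
    refine lt_of_le_of_ne ((Ideal.span_singleton_le_iff_mem _).mpr hpP) fun heq ↦ ?_
    rw [← heq, Ideal.mem_span_singleton] at h₁ h₂
    exact h p hp.irreducible h₁ h₂
  have hmax : P.IsMaximal := isMaximal_of_bot_lt_of_lt
    (bot_lt_iff_ne_bot.mpr (by simpa using hp.ne_zero)) hlt
  exact Ideal.isMaximal_of_isIntegral_of_isMaximal_comap' _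
    (RingHom.isIntegral_of_surjective _ Ideal.Quotient.mk_surjective) I hmax

end MvPolynomial

/-- If `g ∈ ℝ[x,y]` is a squarefree homogeneous polynomial of degree `d ≥ 2`,
then the quotient of `ℝ[x,y]` by the Jacobian ideal of `g` is a finite-dimensional
real vector space. -/
theorem stmt_16 (g : MvPolynomial (Fin 2) ℝ) (d : ℕ) (hd : 2 ≤ d)
    (hsf : Squarefree g) (hhom : g.IsHomogeneous d) :
    FiniteDimensional ℝ
      (MvPolynomial (Fin 2) ℝ ⧸ Ideal.span ({pderiv (0 : Fin 2) g, pderiv (1 : Fin 2) g} :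
        Set (MvPolynomial (Fin 2) ℝ))) := by
  have hd0 : (d : ℝ) ≠ 0 := by
    rw [Nat.cast_ne_zero]
    omega
  have heuler : X 0 * pderiv 0 g + X 1 * pderiv 1 g = C (d : ℝ) * g := by
    simpa [Fin.sum_univ_two] using hhom.sum_X_mul_pderiv
  have hunit : IsUnit (C (d : ℝ) : MvPolynomial (Fin 2) ℝ) := (IsUnit.mk0 _ hd0).map C
  refine finite_quotient_span_pair ?_ fun p hp h₀ h₁ ↦ ?_
  · by_contra! h
    rw [h.1, h.2, mul_zero, mul_zero, add_zero, eq_comm, hunit.mul_right_eq_zero] at heuler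
    exact hsf.ne_zero heuler
  · have hpg : p ∣ g := hunit.dvd_mul_left.mp
      (heuler ▸ dvd_add (h₀.mul_left _) (h₁.mul_left _))
    obtain ⟨i, hi⟩ := exists_not_dvd_pderiv_of_squarefree hsf hp hpg
    fin_cases i
    · exact hi h₀
    · exact hi h₁
end
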